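/- (f̄-separation of Feldman patterns.) Let T, N, M, L be positive integers with N ≥ 20 and M ≥ 2, and let A₁,…,A_N be strings of equal length L over an alphabet Σ. For 1 ≤ j ≤ M let B_j be the (T,N,M)-Feldman pattern of type j in the building blocks A₁,…,A_N. Assume α ∈ (0, 1/7), R ≥ 2, and f̄(C,D) > α for all substrings C and D consisting of consecutive symbols from A_{i₁} and A_{i₂}, respectively, where i₁ ≠ i₂, with |C|, |D| ≥ L/R. Then for all j, k ∈ {1,…,M} with j ≠ k and all substrings B and B̄ of at least T·N^{2M+2}·L consecutive symbols from B_j and B_k, respectively, we have f̄(B, B̄) ≥ α − 4/√N − 1/R. -/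

import Mathlib

/-- A match between two strings `a` and `b`: a finite set of pairs of (0-based) indices,
strictly increasing in both coordinates simultaneously, matching equal symbols. -/
def IsMatch {α : Type*} (a b : List α) (M : Finset (ℕ × ℕ)) : Prop :=
  (∀ p ∈ M, p.1 < a.length ∧ p.2 < b.length ∧ a[p.1]? = b[p.2]?) ∧
  (∀ p ∈ M, ∀ q ∈ M, (p.1 < q.1 ↔ p.2 < q.2))

/-- The maximal cardinality of a match between `a` and `b`. -/
noncomputable def maxMatch {α : Type*} (a b : List α) : ℕ :=
  sSup {r : ℕ | ∃ M : Finset (ℕ × ℕ), IsMatch a b M ∧ M.card = r}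

/-- The `f̄` distance between two strings:
`f̄(a,b) = 1 - 2 · max{|M| : M a match between a and b} / (|a| + |b|)`. -/
noncomputable def fbar {α : Type*} (a b : List α) : ℝ :=
  1 - 2 * (maxMatch a b : ℝ) / ((a.length : ℝ) + (b.length : ℝ))

/-- `k`-fold concatenation of the string `w` with itself. -/
def repeatList {α : Type*} (w : List α) (k : ℕ) : List α := (List.replicate k w).flatten

/-- The `(T,N,M)`-Feldman pattern of type `r` in the building blocks `A 1, …, A N`:
`B_r = (A₁^{T·N^{2r}} A₂^{T·N^{2r}} ⋯ A_N^{T·N^{2r}})^{N^{2(M+1−r)}}`. -/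
def feldmanPattern {α : Type*} (T N M : ℕ) (A : ℕ → List α) (r : ℕ) : List α :=
  repeatList ((List.range N).map (fun i => repeatList (A (i + 1)) (T * N ^ (2 * r)))).flatten
    (N ^ (2 * (M + 1 - r)))

/-!
Cut the positions of the two patterns into blocks of length `L`. A match passes through the
cells `(u, v)`, block `u` of the first pattern against block `v` of the second, in monotone order,
so the hulls of the parts of the match lying in different cells are disjoint and the estimates for
single cells add up. In a cell of two distinct building blocks the separation hypothesis applies,
unless the part of the match there has fewer than `L / R` pairs; this exception costs `O(L / R)`
for each of the `O((n + m) / L)` cells.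

Cells of two equal building blocks are rare. While the pattern of higher type runs through the
copies of one building block, the other one, whose runs are at least `N` times shorter, cycles
through all building blocks and meets that one only a fraction `1 / N` of the time, up to one
period. Hence `4 α / N` bounds the loss.
-/

open Finset

section Match

variable {α : Type*} {a b : List α} {M F : Finset (ℕ × ℕ)}

theorem IsMatch.subset (hM : IsMatch a b M) (hF : F ⊆ M) : IsMatch a b F :=
  ⟨fun p hp => hM.1 p (hF hp), fun p hp q hq => hM.2 p (hF hp) q (hF hq)⟩

theorem IsMatch.snd_le_of_fst_le (hM : IsMatch a b M) {p q : ℕ × ℕ} (hp : p ∈ M) (hq : q ∈ M)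
    (hpq : p.1 ≤ q.1) : p.2 ≤ q.2 :=
  not_lt.1 fun h => hpq.not_gt ((hM.2 q hq p hp).2 h)

theorem IsMatch.injOn_fst (hM : IsMatch a b M) : Set.InjOn Prod.fst (M : Set (ℕ × ℕ)) :=
  fun _ hp _ hq hpq => Prod.ext hpq <|
    (hM.snd_le_of_fst_le hp hq hpq.le).antisymm (hM.snd_le_of_fst_le hq hp hpq.ge)

theorem IsMatch.image_swap (hM : IsMatch a b M) : IsMatch b a (M.image Prod.swap) := by
  refine ⟨forall_mem_image.2 fun p hp => ?_,
    forall_mem_image.2 fun p hp => forall_mem_image.2 fun q hq => (hM.2 p hp q hq).symm⟩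
  obtain ⟨h₁, h₂, h⟩ := hM.1 p hp
  exact ⟨h₂, h₁, h.symm⟩

theorem IsMatch.card_le_length_left (hM : IsMatch a b M) : #M ≤ a.length := by
  simpa using card_le_card_of_injOn Prod.fst (fun p hp => mem_range.2 (hM.1 p hp).1) hM.injOn_fst

theorem bddAbove_card_isMatch (a b : List α) :
    BddAbove {r : ℕ | ∃ M : Finset (ℕ × ℕ), IsMatch a b M ∧ #M = r} :=
  ⟨a.length, by rintro _ ⟨M, hM, rfl⟩; exact hM.card_le_length_left⟩

theorem IsMatch.card_le_maxMatch (hM : IsMatch a b M) : #M ≤ maxMatch a b :=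
  le_csSup (bddAbove_card_isMatch a b) ⟨M, hM, rfl⟩

theorem exists_isMatch_card_eq_maxMatch (a b : List α) :
    ∃ M : Finset (ℕ × ℕ), IsMatch a b M ∧ #M = maxMatch a b :=
  Nat.sSup_mem (s := {r : ℕ | ∃ M : Finset (ℕ × ℕ), IsMatch a b M ∧ #M = r})
    ⟨0, ∅, by simp [IsMatch], rfl⟩ (bddAbove_card_isMatch a b)

theorem maxMatch_le_length_left (a b : List α) : maxMatch a b ≤ a.length := by
  obtain ⟨M, hM, hcard⟩ := exists_isMatch_card_eq_maxMatch a b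
  exact hcard ▸ hM.card_le_length_left

theorem maxMatch_le_maxMatch_swap (a b : List α) : maxMatch a b ≤ maxMatch b a := by
  obtain ⟨M, hM, hcard⟩ := exists_isMatch_card_eq_maxMatch a b
  rw [← hcard, ← card_image_of_injective M Prod.swap_injective]
  exact hM.image_swap.card_le_maxMatch

theorem maxMatch_comm (a b : List α) : maxMatch a b = maxMatch b a :=
  (maxMatch_le_maxMatch_swap a b).antisymm (maxMatch_le_maxMatch_swap b a)

theorem maxMatch_le_length_right (a b : List α) : maxMatch a b ≤ b.length :=
  maxMatch_comm a b ▸ maxMatch_le_length_left b a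

theorem fbar_comm (a b : List α) : fbar a b = fbar b a := by
  rw [fbar, fbar, maxMatch_comm, add_comm]

theorem two_mul_maxMatch_eq (a b : List α) :
    2 * (maxMatch a b : ℝ) = (1 - fbar a b) * (a.length + b.length) := by
  rcases Nat.eq_zero_or_pos a.length with ha | ha
  · have h : maxMatch a b = 0 := Nat.le_zero.1 (ha ▸ maxMatch_le_length_left a b)
    simp [fbar, h, ha]
  · have : (0 : ℝ) < a.length + b.length := by positivity
    rw [fbar, sub_sub_cancel, div_mul_cancel₀ _ this.ne']

theorem IsMatch.exists_of_isInfix {P P' : List α} (hM : IsMatch a b M) (ha : a <:+: P)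
    (hb : b <:+: P') :
    ∃ s s' M', IsMatch P P' M' ∧
      M' ⊆ Ico s (s + a.length) ×ˢ Ico s' (s' + b.length) ∧ #M' = #M := by
  obtain ⟨X, Y, rfl⟩ := ha
  obtain ⟨X', Y', rfl⟩ := hb
  refine ⟨X.length, X'.length,
    M.map ((addLeftEmbedding X.length).prodMap (addLeftEmbedding X'.length)),
    ⟨forall_mem_map.2 fun p hp => ?_, forall_mem_map.2 fun p hp => forall_mem_map.2 fun q hq => ?_⟩,
    fun _ hx => ?_, card_map _⟩
  · obtain ⟨h₁, h₂, h⟩ := hM.1 p hp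
    refine ⟨by simp; omega, by simp; omega, ?_⟩
    simpa [List.append_assoc, List.getElem?_append_right, List.getElem?_append_left, h₁, h₂] using h
  · simpa using hM.2 p hp q hq
  · obtain ⟨p, hp, rfl⟩ := mem_map.1 hx
    obtain ⟨h₁, h₂, -⟩ := hM.1 p hp
    simp [h₁, h₂]

theorem IsMatch.card_le_maxMatch_extract (hM : IsMatch a b M) {lo hi lo' hi' : ℕ}
    (hbox : M ⊆ Ico lo hi ×ˢ Ico lo' hi') :
    #M ≤ maxMatch (a.extract lo hi) (b.extract lo' hi') := by
  have hmem : ∀ p ∈ M, (lo ≤ p.1 ∧ p.1 < hi) ∧ lo' ≤ p.2 ∧ p.2 < hi' := fun p hp => by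
    simpa using hbox hp
  have hinj : Set.InjOn (fun p : ℕ × ℕ => (p.1 - lo, p.2 - lo')) M := by
    intro p hp q hq hpq
    have := hmem p hp
    have := hmem q hq
    simp only [Prod.mk.injEq] at hpq
    ext <;> omega
  rw [← card_image_of_injOn hinj]
  refine IsMatch.card_le_maxMatch ⟨forall_mem_image.2 fun p hp => ?_,
    forall_mem_image.2 fun p hp => forall_mem_image.2 fun q hq => ?_⟩
  · obtain ⟨⟨h₁, h₂⟩, h₁', h₂'⟩ := hmem p hp
    obtain ⟨ha, hb, hab⟩ := hM.1 p hp
    simp only [List.extract_eq_take_drop, List.length_take, List.length_drop]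
    refine ⟨by omega, by omega, ?_⟩
    rw [List.getElem?_take_of_lt (by omega), List.getElem?_take_of_lt (by omega),
      List.getElem?_drop, List.getElem?_drop, Nat.add_sub_cancel' h₁, Nat.add_sub_cancel' h₁', hab]
  · have := hmem p hp
    have := hmem q hq
    have := hM.2 p hp q hq
    omega

end Match

section OrderHull

variable {γ : Type*} [LinearOrder γ] [LocallyFiniteOrder γ] {s t : Finset γ}

/-- The order-convex hull of a finite set: the points lying between two of its elements. It
stands for the substring spanned by the positions that a part of a match uses. -/
def orderHull (s : Finset γ) : Finset γ := s.biUnion fun x => s.biUnion fun y => Icc x y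

theorem mem_orderHull {z : γ} : z ∈ orderHull s ↔ ∃ x ∈ s, ∃ y ∈ s, x ≤ z ∧ z ≤ y := by
  simp [orderHull]

theorem orderHull_subset_Ico {x y : γ} (h : s ⊆ Ico x y) : orderHull s ⊆ Ico x y := fun z hz => by
  obtain ⟨x', hx', y', hy', hxz, hzy⟩ := mem_orderHull.1 hz
  exact mem_Ico.2 ⟨(mem_Ico.1 (h hx')).1.trans hxz, hzy.trans_lt (mem_Ico.1 (h hy')).2⟩

theorem orderHull_eq_Icc (hs : s.Nonempty) : orderHull s = Icc (s.min' hs) (s.max' hs) := by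
  ext z
  rw [mem_orderHull, mem_Icc]
  constructor
  · rintro ⟨x, hx, y, hy, hxz, hzy⟩
    exact ⟨(s.min'_le x hx).trans hxz, hzy.trans (s.le_max' y hy)⟩
  · exact fun hz => ⟨_, s.min'_mem hs, _, s.max'_mem hs, hz⟩

theorem disjoint_orderHull (h : ∀ x ∈ s, ∀ y ∈ t, x < y) :
    Disjoint (orderHull s) (orderHull t) := by
  refine disjoint_left.2 fun z hs ht => ?_
  obtain ⟨-, -, y, hy, -, hzy⟩ := mem_orderHull.1 hs
  obtain ⟨x, hx, -, -, hxz, -⟩ := mem_orderHull.1 ht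
  exact (h y hy x hx).not_ge (hxz.trans hzy)

theorem sum_card_orderHull_fiber_le {β ι : Type*} [LinearOrder ι] (M : Finset β) (f : β → γ)
    (g : β → ι) (hfg : ∀ p ∈ M, ∀ q ∈ M, g p < g q → f p < f q) {x y : γ}
    (hf : ∀ p ∈ M, f p ∈ Ico x y) :
    ∑ l ∈ M.image g, #(orderHull ({p ∈ M | g p = l}.image f)) ≤ #(Ico x y) := by
  have hdisj : ∀ l l', l < l' → Disjoint (orderHull ({p ∈ M | g p = l}.image f))
      (orderHull ({p ∈ M | g p = l'}.image f)) := fun l l' hl => by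
    refine disjoint_orderHull (forall_mem_image.2 fun p hp => forall_mem_image.2 fun q hq => ?_)
    rw [mem_filter] at hp hq
    exact hfg p hp.1 q hq.1 (by rwa [hp.2, hq.2])
  rw [← card_biUnion fun l _ l' _ hl =>
    hl.lt_or_gt.elim (hdisj l l') fun h => (hdisj l' l h).symm]
  exact card_le_card <| biUnion_subset.2 fun l _ => orderHull_subset_Ico <|
    image_subset_iff.2 fun p hp => hf p (mem_filter.1 hp).1

end OrderHull

section Counting

theorem div_mem_Ico {x s n : ℕ} (hx : x ∈ Ico s (s + n)) (c : ℕ) :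
    x / c ∈ Ico (s / c) (s / c + (n / c + 2)) := by
  rw [mem_Ico] at hx ⊢
  have hlow : s / c ≤ x / c := Nat.div_le_div_right hx.1
  have hupp : x / c ≤ (s + n) / c := Nat.div_le_div_right hx.2.le
  have hadd : (s + n) / c ≤ s / c + n / c + 1 := Nat.add_div_le_div_add_div_add_one s n c
  omega

theorem mul_card_le_card_orderHull_add {N r i : ℕ} (hr : 0 < r) {P : Finset ℕ}
    (hP : ∀ x ∈ P, x / r % N = i) : N * #P ≤ #(orderHull P) + N * r := by
  rcases P.eq_empty_or_nonempty with rfl | hne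
  · simp
  -- The translates of `P` by `0, r, …, (N - 1) r` are disjoint.
  have hinj : Set.InjOn (fun z : ℕ × ℕ => z.1 + z.2 * r) (P ×ˢ range N : Finset (ℕ × ℕ)) := by
    rintro ⟨x, c⟩ hx ⟨y, d⟩ hy hxy
    simp only [coe_product, Set.mem_prod, mem_coe, mem_range] at hx hy hxy
    have hdiv : x / r + c = y / r + d := by
      rw [← Nat.add_mul_div_right _ _ hr, ← Nat.add_mul_div_right _ _ hr, hxy]
    have hmod : x / r ≡ y / r [MOD N] := (hP x hx.1).trans (hP y hy.1).symm
    obtain rfl : c = d :=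
      (hmod.add_left_cancel (congrArg (· % N) hdiv)).eq_of_lt_of_lt hx.2 hy.2
    simpa using hxy
  have hmaps : Set.MapsTo (fun z : ℕ × ℕ => z.1 + z.2 * r) (P ×ˢ range N : Finset (ℕ × ℕ))
      (Ico (P.min' hne) (P.max' hne + 1 + N * r) : Finset ℕ) := by
    rintro ⟨x, c⟩ hx
    simp only [coe_product, Set.mem_prod, mem_coe, mem_range] at hx
    have hlow := P.min'_le x hx.1
    have hupp := P.le_max' x hx.1
    have hc : c * r ≤ N * r := Nat.mul_le_mul_right r hx.2.le
    simp only [mem_coe, mem_Ico]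
    omega
  have hcard := card_le_card_of_injOn _ hmaps hinj
  have hle := P.min'_le _ (P.max'_mem hne)
  rw [card_product, card_range, Nat.card_Ico, mul_comm] at hcard
  rw [orderHull_eq_Icc hne, Nat.card_Icc]
  omega

variable {α : Type*} {a b : List α} {M : Finset (ℕ × ℕ)} {s n s' m : ℕ}

theorem IsMatch.mul_card_filter_mod_eq_le (hM : IsMatch a b M)
    (hbox : M ⊆ Ico s (s + n) ×ˢ Ico s' (s' + m)) {r : ℕ} (hr : 0 < r) (r' N : ℕ) :
    N * #{p ∈ M | p.1 / r % N = p.2 / r' % N} ≤ n + (m / r' + 2) * (N * r) := by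
  set G := {p ∈ M | p.1 / r % N = p.2 / r' % N}
  let run : ℕ × ℕ → ℕ := fun p => p.2 / r'
  have hGM : IsMatch a b G := hM.subset (filter_subset _ _)
  have hGbox : G ⊆ Ico s (s + n) ×ˢ Ico s' (s' + m) := (filter_subset _ _).trans hbox
  have hfiber : ∀ l ∈ G.image run, N * #{p ∈ G | run p = l} ≤
      #(orderHull ({p ∈ G | run p = l}.image Prod.fst)) + N * r := fun l _ => by
    rw [← card_image_of_injOn (hGM.subset (filter_subset _ _)).injOn_fst]
    refine mul_card_le_card_orderHull_add (i := l % N) hr (forall_mem_image.2 fun p hp => ?_)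
    obtain ⟨hpG, rfl⟩ := mem_filter.1 hp
    exact (mem_filter.1 hpG).2
  have hhull : ∑ l ∈ G.image run, #(orderHull ({p ∈ G | run p = l}.image Prod.fst)) ≤ n := by
    simpa using sum_card_orderHull_fiber_le G Prod.fst run
      (fun p hp q hq hpq => not_le.1 fun h => hpq.not_ge
        (Nat.div_le_div_right (hGM.snd_le_of_fst_le hq hp h)))
      fun p hp => (mem_product.1 (hGbox hp)).1
  have hruns : #(G.image run) ≤ m / r' + 2 := by
    have : G.image run ⊆ Ico (s' / r') (s' / r' + (m / r' + 2)) := image_subset_iff.2 fun p hp =>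
      div_mem_Ico (mem_product.1 (hGbox hp)).2 r'
    simpa using card_le_card this
  calc N * #G = ∑ l ∈ G.image run, N * #{p ∈ G | run p = l} := by
        rw [← mul_sum, ← card_eq_sum_card_image]
    _ ≤ ∑ l ∈ G.image run,
          (#(orderHull ({p ∈ G | run p = l}.image Prod.fst)) + N * r) := sum_le_sum hfiber
    _ = ∑ l ∈ G.image run, #(orderHull ({p ∈ G | run p = l}.image Prod.fst)) +
          #(G.image run) * (N * r) := by rw [sum_add_distrib, sum_const, smul_eq_mul]
    _ ≤ n + (m / r' + 2) * (N * r) := by gcongr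

end Counting

section Cells

variable {α : Type*} {a b : List α} {M : Finset (ℕ × ℕ)} {p q : ℕ × ℕ} {s n s' m : ℕ}

/-- The index of the antidiagonal of the grid of `L × L` cells on which the cell of `p` lies.
A match passes through the cells in monotone order, so among its pairs the index determines
the cell. -/
def cellIndex (L : ℕ) (p : ℕ × ℕ) : ℕ := p.1 / L + p.2 / L

theorem IsMatch.div_eq_div_of_cellIndex_eq (hM : IsMatch a b M) (hp : p ∈ M) (hq : q ∈ M) {L : ℕ}
    (h : cellIndex L p = cellIndex L q) : p.1 / L = q.1 / L ∧ p.2 / L = q.2 / L := by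
  wlog hpq : p.1 ≤ q.1 generalizing p q
  · exact (this hq hp h.symm (le_of_not_ge hpq)).imp Eq.symm Eq.symm
  have h₁ : p.1 / L ≤ q.1 / L := Nat.div_le_div_right hpq
  have h₂ : p.2 / L ≤ q.2 / L := Nat.div_le_div_right (hM.snd_le_of_fst_le hp hq hpq)
  unfold cellIndex at h
  omega

theorem IsMatch.lt_of_cellIndex_lt (hM : IsMatch a b M) (hp : p ∈ M) (hq : q ∈ M) {L : ℕ}
    (h : cellIndex L p < cellIndex L q) : p.1 < q.1 ∧ p.2 < q.2 := by
  have hlt : p.1 < q.1 := not_le.1 fun hqp => h.not_ge <|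
    add_le_add (Nat.div_le_div_right hqp) (Nat.div_le_div_right (hM.snd_le_of_fst_le hq hp hqp))
  exact ⟨hlt, (hM.2 p hp q hq).1 hlt⟩

theorem card_image_cellIndex_le (hbox : M ⊆ Ico s (s + n) ×ˢ Ico s' (s' + m)) (L : ℕ) :
    (#(M.image (cellIndex L)) : ℝ) ≤ n / L + m / L + 3 := by
  have hsub : M.image (cellIndex L) ⊆
      Ico (s / L + s' / L) (s / L + s' / L + (n / L + m / L + 3)) := by
    refine image_subset_iff.2 fun p hp => ?_
    have h₁ := mem_Ico.1 (div_mem_Ico (mem_product.1 (hbox hp)).1 L)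
    have h₂ := mem_Ico.1 (div_mem_Ico (mem_product.1 (hbox hp)).2 L)
    simp only [cellIndex, mem_Ico]
    omega
  calc (#(M.image (cellIndex L)) : ℝ) ≤ (n / L : ℕ) + (m / L : ℕ) + 3 :=
        mod_cast (card_le_card hsub).trans_eq (by simp)
    _ ≤ n / L + m / L + 3 := by gcongr <;> exact Nat.cast_div_le

theorem extract_isInfix_of_getElem?_eq {w : List α} {c lo hi : ℕ} (hlo : c ≤ lo)
    (h : ∀ x, lo ≤ x → x < hi → a[x]? = w[x - c]?) : a.extract lo hi <:+: w := by
  have heq : a.extract lo hi = w.extract (lo - c) (hi - c) := by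
    simp only [List.extract_eq_take_drop]
    refine List.ext_getElem? fun i => ?_
    rcases lt_or_ge i (hi - lo) with hi' | hi'
    · rw [List.getElem?_take_of_lt hi', List.getElem?_take_of_lt (by omega), List.getElem?_drop,
        List.getElem?_drop, h _ (by omega) (by omega), Nat.sub_add_comm hlo]
    · rw [List.getElem?_take_eq_none hi', List.getElem?_take_eq_none (by omega)]
  rw [heq, List.extract_eq_take_drop]
  exact (List.take_prefix _ _).isInfix.trans (List.drop_suffix _ _).isInfix

theorem exists_extract_isInfix_of_div_eq {w : List α} {L u : ℕ}
    (h : ∀ x < a.length, x / L = u → a[x]? = w[x % L]?) {P : Finset ℕ} (hP : P.Nonempty)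
    (hPu : ∀ x ∈ P, x < a.length ∧ x / L = u) :
    ∃ lo hi, P ⊆ Ico lo hi ∧ a.extract lo hi <:+: w ∧
      (a.extract lo hi).length = #(orderHull P) := by
  have hmin := (hPu _ (P.min'_mem hP)).2
  obtain ⟨hmax_lt, hmax⟩ := hPu _ (P.max'_mem hP)
  refine ⟨P.min' hP, P.max' hP + 1,
    fun x hx => mem_Ico.2 ⟨P.min'_le x hx, Nat.lt_succ_of_le (P.le_max' x hx)⟩, ?_, ?_⟩
  · refine extract_isInfix_of_getElem?_eq (c := L * u) (hmin ▸ Nat.mul_div_le _ L)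
      fun x hx hx' => ?_
    have hxu : x / L = u := (hmax ▸ Nat.div_le_div_right (Nat.le_of_lt_succ hx')).antisymm
      (hmin ▸ Nat.div_le_div_right hx)
    rw [h x (by omega) hxu, Nat.mod_eq_sub_mul_div, hxu]
  · rw [orderHull_eq_Icc hP, Nat.card_Icc, List.extract_eq_take_drop, List.length_take,
      List.length_drop]
    omega

end Cells

section Separation

variable {S : Type*} {C D v w : List S} {ℓ α : ℝ}

/-- The separation hypothesis on a pair of building blocks: substrings of `v` and `w` of length
at least `ℓ` are at `f̄`-distance at least `α`. -/
def FbarSeparated (ℓ α : ℝ) (v w : List S) : Prop :=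
  ∀ C D : List S, C <:+: v → D <:+: w → ℓ ≤ C.length → ℓ ≤ D.length → α ≤ fbar C D

theorem FbarSeparated.maxMatch_le (h : FbarSeparated ℓ α v w) (hC : C <:+: v) (hD : D <:+: w)
    (hℓ : 0 ≤ ℓ) (hα₀ : 0 ≤ α) (hα₁ : α ≤ 1) :
    (maxMatch C D : ℝ) ≤ (1 - α) / 2 * (C.length + D.length) + α * ℓ := by
  have hleft : (maxMatch C D : ℝ) ≤ C.length := mod_cast maxMatch_le_length_left C D
  have hright : (maxMatch C D : ℝ) ≤ D.length := mod_cast maxMatch_le_length_right C D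
  by_cases hlong : ℓ ≤ maxMatch C D
  · have hfbar := h C D hC hD (hlong.trans hleft) (hlong.trans hright)
    have : (1 - fbar C D) * (C.length + D.length : ℝ) ≤ (1 - α) * (C.length + D.length) := by
      gcongr
    linarith [two_mul_maxMatch_eq C D, mul_nonneg hα₀ hℓ]
  · have hshort : α * maxMatch C D ≤ α * ℓ := by gcongr; exact le_of_not_ge hlong
    have : (1 - α) * maxMatch C D ≤ (1 - α) * ((C.length + D.length) / 2) :=
      mul_le_mul_of_nonneg_left (by linarith) (by linarith)
    linarith

end Separation

section CyclicPattern

theorem getElem?_flatten_of_forall_length_eq {α : Type*} {c : ℕ} {ls : List (List α)}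
    (h : ∀ l ∈ ls, l.length = c) {x : ℕ} (hx : x < ls.length * c) :
    ls.flatten[x]? = ls[x / c]?.bind (·[x % c]?) := by
  induction ls generalizing x with
  | nil => simp at hx
  | cons l ls ih =>
    obtain ⟨rfl, hls⟩ := List.forall_mem_cons.1 h
    rw [List.flatten_cons]
    rcases lt_or_ge x l.length with hxl | hxl
    · rw [List.getElem?_append_left hxl, Nat.div_eq_of_lt hxl, Nat.mod_eq_of_lt hxl]
      rfl
    · obtain ⟨y, rfl⟩ := Nat.exists_eq_add_of_le' hxl
      rw [List.length_cons, Nat.succ_mul, Nat.add_lt_add_iff_right] at hx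
      rw [List.getElem?_append_right hxl, Nat.add_sub_cancel, ih hls hx,
        Nat.add_div_right _ (Nat.pos_of_lt_mul_left hx), Nat.add_mod_right, List.getElem?_cons_succ]

theorem length_repeatList {α : Type*} (w : List α) (k : ℕ) :
    (repeatList w k).length = k * w.length := by
  simp [repeatList]

theorem getElem?_repeatList {α : Type*} {w : List α} {k x : ℕ} (hx : x < k * w.length) :
    (repeatList w k)[x]? = w[x % w.length]? := by
  have hdiv : x / w.length < k := Nat.div_lt_of_lt_mul (mul_comm k _ ▸ hx)
  rw [repeatList, getElem?_flatten_of_forall_length_eq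
    (fun l hl => congrArg List.length (List.eq_of_mem_replicate hl)) (by simpa using hx)]
  simp [hdiv]

variable {S : Type*} {A : ℕ → List S} {L N t t' k k' : ℕ}

/-- The string `(A₀ᵗ A₁ᵗ ⋯ A_{N-1}ᵗ)ᵏ`. A Feldman pattern is of this form, with blocks numbered
from `0` instead of `1`. -/
def cyclicPattern (A : ℕ → List S) (N t k : ℕ) : List S :=
  repeatList ((List.range N).map fun i => repeatList (A i) t).flatten k

theorem getElem?_cyclicPattern (hA : ∀ i < N, (A i).length = L) {x : ℕ}
    (hx : x < (cyclicPattern A N t k).length) :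
    (cyclicPattern A N t k)[x]? = (A (x / L / t % N))[x % L]? := by
  have hruns : ∀ l ∈ (List.range N).map fun i => repeatList (A i) t, l.length = L * t := by
    simpa [length_repeatList, mul_comm L] using fun i hi => Or.inl (hA i hi)
  have hcycle : ((List.range N).map fun i => repeatList (A i) t).flatten.length = L * t * N := by
    rw [List.length_flatten, List.map_congr_left (g := fun _ => L * t) hruns]
    simp [Function.comp_def, mul_comm]
  rw [cyclicPattern, length_repeatList, hcycle] at hx
  have hpos : 0 < L * t * N := Nat.pos_of_lt_mul_left hx
  have hi : x / (L * t) % N < N := Nat.mod_lt _ (Nat.pos_of_mul_pos_left hpos)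
  rw [cyclicPattern, getElem?_repeatList (by rwa [hcycle]), hcycle,
    getElem?_flatten_of_forall_length_eq hruns
      (by simpa [mul_comm N] using Nat.mod_lt x hpos),
    Nat.mod_mul_right_div_self, Nat.mod_mul_right_mod]
  simp only [List.getElem?_map, List.getElem?_range hi, Option.map_some, Option.bind_some]
  rw [getElem?_repeatList, hA _ hi, Nat.mod_mul_right_mod, Nat.div_div_eq_div_mul]
  rw [hA _ hi, mul_comm t]
  exact Nat.mod_lt _ (Nat.pos_of_mul_pos_right hpos)

variable {M : Finset (ℕ × ℕ)} {u v : ℕ}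

theorem IsMatch.exists_isInfix_of_cell (hA : ∀ i < N, (A i).length = L)
    (hM : IsMatch (cyclicPattern A N t k) (cyclicPattern A N t' k') M) (hne : M.Nonempty)
    (hcell : ∀ p ∈ M, p.1 / L = u ∧ p.2 / L = v) :
    ∃ C D, C <:+: A (u / t % N) ∧ D <:+: A (v / t' % N) ∧
      C.length = #(orderHull (M.image Prod.fst)) ∧ D.length = #(orderHull (M.image Prod.snd)) ∧
      #M ≤ maxMatch C D := by
  obtain ⟨lo, hi, hfst, hC, hlenC⟩ := exists_extract_isInfix_of_div_eq (u := u)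
    (fun x hx hxu => by rw [getElem?_cyclicPattern hA hx, hxu]) (hne.image Prod.fst)
    (forall_mem_image.2 fun p hp => ⟨(hM.1 p hp).1, (hcell p hp).1⟩)
  obtain ⟨lo', hi', hsnd, hD, hlenD⟩ := exists_extract_isInfix_of_div_eq (u := v)
    (fun x hx hxv => by rw [getElem?_cyclicPattern hA hx, hxv]) (hne.image Prod.snd)
    (forall_mem_image.2 fun p hp => ⟨(hM.1 p hp).2.1, (hcell p hp).2⟩)
  exact ⟨_, _, hC, hD, hlenC, hlenD, hM.card_le_maxMatch_extract fun p hp =>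
    mem_product.2 ⟨hfst (mem_image_of_mem _ hp), hsnd (mem_image_of_mem _ hp)⟩⟩

variable {ℓ α : ℝ}

theorem IsMatch.card_le_of_cell (hN : 0 < N) (hA : ∀ i < N, (A i).length = L)
    (hℓ : 0 ≤ ℓ) (hα₀ : 0 ≤ α) (hα₁ : α ≤ 1)
    (hsep : (Set.Iio N).Pairwise fun i j => FbarSeparated ℓ α (A i) (A j))
    (hM : IsMatch (cyclicPattern A N t k) (cyclicPattern A N t' k') M) (hne : M.Nonempty)
    (hcell : ∀ p ∈ M, p.1 / L = u ∧ p.2 / L = v) :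
    (#M : ℝ) ≤ (1 - α) / 2 *
        (#(orderHull (M.image Prod.fst)) + #(orderHull (M.image Prod.snd))) +
      α * #{p ∈ M | p.1 / L / t % N = p.2 / L / t' % N} + α * ℓ := by
  obtain ⟨C, D, hC, hD, hlenC, hlenD, hcard⟩ := hM.exists_isInfix_of_cell hA hne hcell
  rw [← hlenC, ← hlenD]
  have hcardR : (#M : ℝ) ≤ maxMatch C D := mod_cast hcard
  by_cases hblock : u / t % N = v / t' % N
  · have hfilter : {p ∈ M | p.1 / L / t % N = p.2 / L / t' % N} = M :=
      filter_true_of_mem fun p hp => by rw [(hcell p hp).1, (hcell p hp).2, hblock]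
    have hleft : (maxMatch C D : ℝ) ≤ C.length := mod_cast maxMatch_le_length_left C D
    have hright : (maxMatch C D : ℝ) ≤ D.length := mod_cast maxMatch_le_length_right C D
    have : (1 - α) * #M ≤ (1 - α) * ((C.length + D.length) / 2) :=
      mul_le_mul_of_nonneg_left (by linarith) (by linarith)
    rw [hfilter]
    linarith [mul_nonneg hα₀ hℓ]
  · have hfar := hsep (Nat.mod_lt _ hN) (Nat.mod_lt _ hN) hblock
    have hsame : 0 ≤ α * #{p ∈ M | p.1 / L / t % N = p.2 / L / t' % N} := by positivity
    linarith [hfar.maxMatch_le hC hD hℓ hα₀ hα₁]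

variable {s n s' m : ℕ}

theorem IsMatch.card_le_of_cyclicPattern (hN : 0 < N) (hA : ∀ i < N, (A i).length = L)
    (hℓ : 0 ≤ ℓ) (hα₀ : 0 ≤ α) (hα₁ : α ≤ 1)
    (hsep : (Set.Iio N).Pairwise fun i j => FbarSeparated ℓ α (A i) (A j))
    (hM : IsMatch (cyclicPattern A N t k) (cyclicPattern A N t' k') M)
    (hbox : M ⊆ Ico s (s + n) ×ˢ Ico s' (s' + m)) :
    (#M : ℝ) ≤ (1 - α) / 2 * (n + m) + α * #{p ∈ M | p.1 / L / t % N = p.2 / L / t' % N} +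
      α * ℓ * (n / L + m / L + 3) := by
  set I := M.image (cellIndex L)
  let cell : ℕ → Finset (ℕ × ℕ) := fun l => {p ∈ M | cellIndex L p = l}
  let same : ℕ × ℕ → Prop := fun p => p.1 / L / t % N = p.2 / L / t' % N
  have hcell : ∀ l ∈ I, (#(cell l) : ℝ) ≤ (1 - α) / 2 *
      (#(orderHull ((cell l).image Prod.fst)) + #(orderHull ((cell l).image Prod.snd))) +
      α * #{p ∈ cell l | same p} + α * ℓ := by
    intro l hl
    obtain ⟨q, hq, rfl⟩ := mem_image.1 hl
    refine (hM.subset (filter_subset _ _)).card_le_of_cell (u := q.1 / L)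
      (v := q.2 / L) hN hA hℓ hα₀ hα₁ hsep
      ⟨q, mem_filter.2 ⟨hq, rfl⟩⟩ fun p hp => ?_
    obtain ⟨hpM, hpq⟩ := mem_filter.1 hp
    exact hM.div_eq_div_of_cellIndex_eq hpM hq hpq
  have hfst : ∑ l ∈ I, #(orderHull ((cell l).image Prod.fst)) ≤ n := by
    simpa using sum_card_orderHull_fiber_le M Prod.fst (cellIndex L)
      (fun p hp q hq h => (hM.lt_of_cellIndex_lt hp hq h).1) fun p hp => (mem_product.1 (hbox hp)).1
  have hsnd : ∑ l ∈ I, #(orderHull ((cell l).image Prod.snd)) ≤ m := by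
    simpa using sum_card_orderHull_fiber_le M Prod.snd (cellIndex L)
      (fun p hp q hq h => (hM.lt_of_cellIndex_lt hp hq h).2) fun p hp => (mem_product.1 (hbox hp)).2
  have hsame : ∑ l ∈ I, #{p ∈ cell l | same p} = #{p ∈ M | same p} := by
    rw [card_eq_sum_card_fiberwise (t := I) fun p hp =>
      mem_image_of_mem (cellIndex L) (mem_filter.1 hp).1]
    exact sum_congr rfl fun l _ => by rw [filter_comm]
  calc (#M : ℝ) = ∑ l ∈ I, (#(cell l) : ℝ) := mod_cast card_eq_sum_card_image (cellIndex L) M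
    _ ≤ _ := sum_le_sum hcell
    _ = (1 - α) / 2 * ((∑ l ∈ I, #(orderHull ((cell l).image Prod.fst)) : ℕ) +
          (∑ l ∈ I, #(orderHull ((cell l).image Prod.snd)) : ℕ)) +
          α * (∑ l ∈ I, #{p ∈ cell l | same p} : ℕ) + α * ℓ * #I := by
        push_cast
        rw [sum_add_distrib, sum_add_distrib, ← mul_sum, ← mul_sum, sum_add_distrib, sum_const,
          nsmul_eq_mul, mul_comm (#I : ℝ)]
    _ ≤ _ := by
        rw [hsame]
        gcongr
        exact card_image_cellIndex_le hbox L

theorem IsMatch.card_filter_block_eq_le (hN : 0 < N) (hL : 0 < L) (ht : 0 < t)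
    (htt' : t * N ≤ t') {a b : List S} (hM : IsMatch a b M)
    (hbox : M ⊆ Ico s (s + n) ×ˢ Ico s' (s' + m)) (hlen : 2 * (t * N * L) ≤ n + m) :
    (#{p ∈ M | p.1 / L / t % N = p.2 / L / t' % N} : ℝ) ≤ 2 * (n + m) / N := by
  simp only [Nat.div_div_eq_div_mul]
  have hcount := hM.mul_card_filter_mod_eq_le hbox (Nat.mul_pos hL ht) (L * t') N
  have hperiod : N * (L * t) ≤ L * t' := by nlinarith
  have hruns : m / (L * t') * (N * (L * t)) ≤ m :=
    (Nat.mul_le_mul_left _ hperiod).trans (Nat.div_mul_le_self m _)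
  rw [le_div_iff₀' (by positivity)]
  norm_cast
  nlinarith

theorem le_fbar_of_isInfix_cyclicPattern (hN : 0 < N) (hL : 0 < L) (ht : 0 < t)
    (htt' : t * N ≤ t') (hA : ∀ i < N, (A i).length = L) (hℓ : 0 ≤ ℓ) (hα₀ : 0 ≤ α)
    (hα₁ : α ≤ 1) (hsep : (Set.Iio N).Pairwise fun i j => FbarSeparated ℓ α (A i) (A j))
    {B B' : List S} (hB : B <:+: cyclicPattern A N t k) (hB' : B' <:+: cyclicPattern A N t' k')
    (hlen : 2 * (t * N * L) ≤ B.length + B'.length) :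
    α * (1 - 4 / N - 5 * (ℓ / L)) ≤ fbar B B' := by
  obtain ⟨M₀, hM₀, hcard₀⟩ := exists_isMatch_card_eq_maxMatch B B'
  obtain ⟨s, s', M, hM, hbox, hcard⟩ := hM₀.exists_of_isInfix hB hB'
  have hmatch := hM.card_le_of_cyclicPattern hN hA hℓ hα₀ hα₁ hsep hbox
  have hsame := hM.card_filter_block_eq_le hN hL ht htt' hbox hlen
  rw [hcard, hcard₀] at hmatch
  set X : ℝ := B.length + B'.length with hX
  have hL' : (0 : ℝ) < L := mod_cast hL
  have hLX : 2 * (L : ℝ) ≤ X := by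
    have : 2 * L ≤ B.length + B'.length := by nlinarith [Nat.mul_pos ht hN]
    rw [hX]
    exact_mod_cast this
  have hcells : ℓ * (B.length / L + B'.length / L + 3) ≤ 5 / 2 * (ℓ / L) * X := calc
    ℓ * (B.length / L + B'.length / L + 3) = ℓ / L * (X + 3 * L) := by rw [hX]; field_simp
    _ ≤ ℓ / L * (X + 3 * (X / 2)) := by gcongr; linarith
    _ = 5 / 2 * (ℓ / L) * X := by ring
  have hbound : (1 - fbar B B') * X ≤ (1 - α * (1 - 4 / N - 5 * (ℓ / L))) * X := calc
    (1 - fbar B B') * X = 2 * maxMatch B B' := (two_mul_maxMatch_eq B B').symm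
    _ ≤ (1 - α) * X + 2 * (α * (2 * X / N) + α * (5 / 2 * (ℓ / L) * X)) := by
        linarith [mul_le_mul_of_nonneg_left hsame hα₀, mul_le_mul_of_nonneg_left hcells hα₀]
    _ = (1 - α * (1 - 4 / N - 5 * (ℓ / L))) * X := by ring
  linarith [le_of_mul_le_mul_right hbound (by linarith)]

end CyclicPattern

theorem feldmanPattern_eq_cyclicPattern {S : Type*} (T N M : ℕ) (A : ℕ → List S) (r : ℕ) :
    feldmanPattern T N M A r =
      cyclicPattern (fun i => A (i + 1)) N (T * N ^ (2 * r)) (N ^ (2 * (M + 1 - r))) := rfl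

theorem fbar_feldman_patterns_general {S : Type*} {T N M L : ℕ} (hT : 0 < T) (hN : 0 < N)
    (hL : 0 < L) {A : ℕ → List S} (hA : ∀ i ∈ Set.Icc 1 N, (A i).length = L)
    {α : ℝ} (hα₀ : 0 ≤ α) (hα₁ : α ≤ 1) {R : ℝ} (hR : 0 < R)
    (hsep : (Set.Icc 1 N).Pairwise fun i j => FbarSeparated (L / R) α (A i) (A j))
    {j k : ℕ} (hjk : j ≠ k) {B B' : List S}
    (hB : B <:+: feldmanPattern T N M A j) (hB' : B' <:+: feldmanPattern T N M A k)
    (hlen : 2 * (T * N ^ (2 * min j k + 1) * L) ≤ B.length + B'.length) :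
    α * (1 - 4 / N - 5 / R) ≤ fbar B B' := by
  wlog hlt : j < k generalizing j k B B'
  · rw [fbar_comm]
    exact this hjk.symm hB' hB (by rwa [min_comm, add_comm B'.length])
      (hjk.lt_or_gt.resolve_left hlt)
  rw [feldmanPattern_eq_cyclicPattern] at hB hB'
  have hperiod : T * N ^ (2 * j) * N = T * N ^ (2 * j + 1) := by rw [mul_assoc, ← pow_succ]
  have hfbar := le_fbar_of_isInfix_cyclicPattern (ℓ := L / R) hN hL
    (t := T * N ^ (2 * j)) (t' := T * N ^ (2 * k)) (by positivity)
    (by rw [hperiod]; gcongr; omega) (fun i hi => hA (i + 1) ⟨by omega, hi⟩) (by positivity)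
    hα₀ hα₁
    (fun i hi i' hi' hii' => hsep ⟨by omega, hi⟩ ⟨by omega, hi'⟩ (by simpa using hii')) hB hB'
    (by rwa [hperiod, ← min_eq_left hlt.le])
  have hL' : (L : ℝ) ≠ 0 := by positivity
  rwa [div_div_cancel_left' hL', ← div_eq_mul_inv] at hfbar

theorem sub_four_div_sqrt_sub_one_div_le {N α R : ℝ} (hN : 1 ≤ N) (hα : 5 * α ≤ 1)
    (hR : 0 ≤ R) : α - 4 / √N - 1 / R ≤ α * (1 - 4 / N - 5 / R) := by
  have hsqrt : α * (4 / N) ≤ 4 / √N := calc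
    α * (4 / N) ≤ 1 * (4 / N) := by gcongr; linarith
    _ ≤ 4 / √N := by
      rw [one_mul]
      gcongr
      exact Real.sqrt_le_self_iff.2 (Or.inr hN)
  have hR' : 5 * α / R ≤ 1 / R := by gcongr
  linarith [show α * (1 - 4 / N - 5 / R) = α - α * (4 / N) - 5 * α / R by ring]

/-- `f̄`-separation of distinct Feldman patterns: substantial substrings of Feldman
patterns of different types in `α`-separated building blocks are `(α − 4/√N − 1/R)`-apart. -/
theorem fbar_feldman_patterns {S : Type*} (T N M L : ℕ)
    (hT : 0 < T) (hN : 20 ≤ N) (hM : 2 ≤ M) (hL : 0 < L)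
    (A : ℕ → List S) (hA : ∀ i, 1 ≤ i → i ≤ N → (A i).length = L)
    (α : ℝ) (hα0 : 0 < α) (hα7 : α < 1 / 7) (R : ℝ) (hR : 2 ≤ R)
    (hsep : ∀ i₁ i₂, 1 ≤ i₁ → i₁ ≤ N → 1 ≤ i₂ → i₂ ≤ N → i₁ ≠ i₂ →
      ∀ C D : List S, C <:+: A i₁ → D <:+: A i₂ →
        (L : ℝ) / R ≤ (C.length : ℝ) → (L : ℝ) / R ≤ (D.length : ℝ) → fbar C D > α) :
    ∀ j k, 1 ≤ j → j ≤ M → 1 ≤ k → k ≤ M → j ≠ k →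
      ∀ B B' : List S, B <:+: feldmanPattern T N M A j → B' <:+: feldmanPattern T N M A k →
        T * N ^ (2 * M + 2) * L ≤ B.length → T * N ^ (2 * M + 2) * L ≤ B'.length →
        fbar B B' ≥ α - 4 / Real.sqrt (N : ℝ) - 1 / R := by
  intro j k _ hjM _ hkM hjk B B' hB hB' hlen hlen'
  have hmono : T * N ^ (2 * min j k + 1) * L ≤ T * N ^ (2 * M + 2) * L := by
    gcongr <;> omega
  refine (sub_four_div_sqrt_sub_one_div_le (mod_cast by omega) (by linarith)
    (by linarith)).trans ?_
  exact fbar_feldman_patterns_general hT (by omega) hL (fun i hi => hA i hi.1 hi.2) hα0.le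
    (by linarith) (by linarith)
    (fun i hi i' hi' hii' C D hC hD hlenC hlenD =>
      (hsep i i' hi.1 hi.2 hi'.1 hi'.2 hii' C D hC hD hlenC hlenD).le)
    hjk hB hB' (by omega)
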